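/- Let H be a non-semisimple Hopf algebra over k of dimension pq, where p ≤ q are odd primes. Then the index of H equals p. -/

import Mathlib

open scoped TensorProduct

/-- A group-like element of a coalgebra: a nonzero element `a` with `Δ a = a ⊗ a`. -/
def IsGroupLike (k : Type*) {H : Type*} [CommSemiring k] [AddCommMonoid H] [Module k H]
    [Coalgebra k H] (a : H) : Prop :=
  a ≠ 0 ∧ Coalgebra.comul (R := k) a = a ⊗ₜ[k] a

/-- The convolution product on the dual of a coalgebra. -/
noncomputable def conv {k H : Type*} [CommSemiring k] [AddCommMonoid H] [Module k H]
    [Coalgebra k H] (f g : Module.Dual k H) : Module.Dual k H :=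
  LinearMap.mul' k k ∘ₗ TensorProduct.map f g ∘ₗ Coalgebra.comul

/-- `l ∈ H*` is a right integral of `H*`: `l * β = β(1) • l` for the convolution product. -/
def IsRightIntegralDual (k : Type*) {H : Type*} [CommSemiring k] [Semiring H]
    [HopfAlgebra k H] (l : Module.Dual k H) : Prop :=
  ∀ f : Module.Dual k H, conv l f = f 1 • l

/-- `Λ ∈ H` is a left integral of `H`: `a * Λ = ε(a) • Λ` for all `a`. -/
def IsLeftIntegral (k : Type*) {H : Type*} [CommSemiring k] [Semiring H]
    [HopfAlgebra k H] (L : H) : Prop :=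
  ∀ a : H, a * L = Coalgebra.counit (R := k) a • L

/-- `Λ ∈ H` is a right integral of `H`: `Λ * a = ε(a) • Λ` for all `a`. -/
def IsRightIntegral (k : Type*) {H : Type*} [CommSemiring k] [Semiring H]
    [HopfAlgebra k H] (L : H) : Prop :=
  ∀ a : H, L * a = Coalgebra.counit (R := k) a • L

/-- `g` is the distinguished group-like element of `H`: it is group-like and
`β * λ = β(g) • λ` for some nonzero right integral `λ` of `H*`. -/
def IsDistinguishedGroupLike (k : Type*) {H : Type*} [CommSemiring k] [Semiring H]
    [HopfAlgebra k H] (g : H) : Prop :=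
  IsGroupLike k g ∧ ∃ l : Module.Dual k H, l ≠ 0 ∧ IsRightIntegralDual k l ∧
    ∀ f : Module.Dual k H, conv f l = f g • l

/-- `α` is the distinguished group-like element of `H*`: an algebra map `H → k` with
`Λ * a = α(a) • Λ` for some nonzero left integral `Λ` of `H`. -/
def IsDistinguishedGroupLikeDual (k : Type*) {H : Type*} [CommSemiring k] [Semiring H]
    [HopfAlgebra k H] (α : H →ₐ[k] k) : Prop :=
  ∃ L : H, L ≠ 0 ∧ IsLeftIntegral k L ∧ ∀ a : H, L * a = α a • L

/-- `IsHopfIndex k g n` : `n` is the index of the Hopf algebra `H` with distinguished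
group-like element `g`, i.e. the smallest positive integer `n` with `S ^ (4 n) = id` and
`g ^ n = 1`, where `S` is the antipode. -/
def IsHopfIndex (k : Type*) {H : Type*} [CommSemiring k] [Semiring H] [HopfAlgebra k H]
    (g : H) (n : ℕ) : Prop :=
  0 < n ∧ (HopfAlgebra.antipode (R := k) (A := H) : Module.End k H) ^ (4 * n) = 1 ∧ g ^ n = 1 ∧
    ∀ m : ℕ, 0 < m → (HopfAlgebra.antipode (R := k) (A := H) : Module.End k H) ^ (4 * m) = 1 →
      g ^ m = 1 → n ≤ m

/-- The simultaneous eigenspace `H^ω_{a,i,j} = {u ∈ H | S² u = (-1)^a ω^i • u, u * g = ω^j • u}`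
for `(a,i,j) ∈ ℤ/2 × ℤ/n × ℤ/n`. -/
noncomputable def hopfEigenspace {k H : Type*} [CommRing k] [Ring H] [HopfAlgebra k H]
    (g : H) (ω : k) {n : ℕ} (t : ZMod 2 × ZMod n × ZMod n) : Submodule k H :=
  Module.End.eigenspace ((HopfAlgebra.antipode (R := k) (A := H) : Module.End k H) ^ 2)
      ((-1 : k) ^ t.1.val * ω ^ t.2.1.val) ⊓
    Module.End.eigenspace (LinearMap.mulRight k g : Module.End k H) (ω ^ t.2.2.val)

/-- Convolution powers of an element of the dual; the zeroth power is the counit,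
the unit of the convolution algebra. -/
noncomputable def convPow {k H : Type*} [CommSemiring k] [AddCommMonoid H] [Module k H]
    [Coalgebra k H] (f : Module.Dual k H) : ℕ → Module.Dual k H
  | 0 => Coalgebra.counit
  | m + 1 => conv f (convPow f m)

/-!
Write `n = pq`, let `λ` be a right integral of `H*` and `Λ` a left integral of `H` with
`λ(Λ) = 1`, and let `α` be the distinguished character, `Λa = α(a)Λ`. By Radford's formula `S⁴` is
conjugation by `g` followed by windings by `α`, all of which commute, so that `S^{4m} = 1` as soon
as `g^m = 1` and `α^m = 1`.

As `H` is not semisimple, `ε(Λ) = 0` by Maschke's theorem, whence every character kills `Λ`. The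
formula `tr(φ ∘ S) = λ(φ(Λ₁g⁻¹)Λ₂)` then gives `tr(S² L_c) = 0` and `tr(S² R_β) = 0` for
left multiplication by a group-like element `c` and winding by a character `β`. Moreover, by the
Galois map `x ⊗ y ↦ x₁ ⊗ x₂y` the traces `χ` of `L_c` and `R_β` satisfy `χ² = nχ`; so they vanish
off the identity, and the fixed spaces of `L_c` and `R_β` have dimensions `n / ord c` and
`n / ord β`. On these spaces `S²` has trace zero.

Were `ord g` or `ord α` not a divisor of `p`, it would be `q` with `p < q`, and the other order
would divide `q`, since coprime orders have product less than `n`; so `S^{4q} = 1`. But an odd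
number of `2q`-th roots of unity with sum zero has at least `q` elements, which is more than the
dimension `p` of the fixed space. Hence `g^p = 1` and `S^{4p} = 1`. Finally, `S^{4m} = 1` with
`0 < m < p` would yield `S⁴ = 1`, and `tr S² = 0` would make `n` even.
-/

section RootsOfUnity

open Polynomial

lemma eq_one_of_norm_le_one_of_sum_eq_card {s : Multiset ℂ} (hs : ∀ z ∈ s, ‖z‖ ≤ 1)
    (hsum : s.sum = s.card) {z : ℂ} (hz : z ∈ s) : z = 1 := by
  have hre_le (w : ℂ) (hw : w ∈ s) : w.re ≤ 1 := (Complex.re_le_norm w).trans (hs w hw)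
  have hsum_re : (s.map fun w => 1 - w.re).sum = 0 := by
    have hmap : (s.map Complex.re).sum = s.card := by
      simpa [hsum] using (map_multiset_sum Complex.reAddGroupHom s).symm
    simp [Multiset.sum_map_sub, hmap]
  have hre : z.re = 1 := by
    refine (sub_eq_zero.mp (Multiset.all_zero_of_le_zero_le_of_sum_eq_zero ?_ hsum_re
      _ (Multiset.mem_map_of_mem _ hz))).symm
    simpa using hre_le
  refine Complex.ext hre (Complex.abs_re_eq_norm.mp (le_antisymm (Complex.abs_re_le_norm z) ?_))
  simpa [hre] using hs z hz

lemma eq_one_of_pow_eq_one_of_sum_eq_card {K : Type*} [Field K] [CharZero K] {s : Multiset K}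
    {d : ℕ} (hd : d ≠ 0) (hs : ∀ x ∈ s, x ^ d = 1) (hsum : s.sum = s.card) {x : K} (hx : x ∈ s) :
    x = 1 := by
  have halg (y : K) (hy : y ∈ s) : y ∈ algebraicClosure ℚ K :=
    mem_algebraicClosure_iff.mpr (.of_pow hd.bot_lt (by rw [hs y hy]; exact isAlgebraic_one))
  lift s to Multiset (algebraicClosure ℚ K) using halg
  obtain ⟨y, hy, rfl⟩ := Multiset.mem_map.mp hx
  have : Algebra.IsAlgebraic ℚ (algebraicClosure ℚ K) := algebraicClosure.isAlgebraic ℚ K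
  let φ : algebraicClosure ℚ K →ₐ[ℚ] ℂ := IsAlgClosed.lift
  have hφsum : (s.map φ).sum = (s.map φ).card := by
    have : s.sum = s.card := by
      apply (algebraMap (algebraicClosure ℚ K) K).injective
      rw [map_multiset_sum, map_natCast]
      exact hsum.trans (congrArg Nat.cast (Multiset.card_map _ _))
    simp [← map_multiset_sum, this]
  have hφ (z : ℂ) (hz : z ∈ s.map φ) : ‖z‖ ≤ 1 := by
    obtain ⟨w, hw, rfl⟩ := Multiset.mem_map.mp hz
    have hwd : w ^ d = 1 := Subtype.ext (hs w (Multiset.mem_map_of_mem _ hw))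
    exact (Complex.norm_eq_one_of_pow_eq_one (by rw [← map_pow, hwd, map_one]) hd).le
  have := eq_one_of_norm_le_one_of_sum_eq_card hφ hφsum (Multiset.mem_map_of_mem _ hy)
  rw [(map_eq_one_iff φ φ.injective).mp this]
  rfl

section

variable {K : Type*} [Field K] {q : ℕ} {ω : K}

lemma dvd_eval_one_of_aeval_primitiveRoot_eq_zero [CharZero K] (hq : q.Prime)
    (hω : IsPrimitiveRoot ω q) {F : ℤ[X]} (hF : aeval ω F = 0) : (q : ℤ) ∣ F.eval 1 := by
  have : Fact q.Prime := ⟨hq⟩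
  have hdvd : cyclotomic q ℤ ∣ F := by
    rw [cyclotomic_eq_minpoly hω hq.pos]
    exact minpoly.isIntegrallyClosed_dvd (hω.isIntegral hq.pos) hF
  simpa using eval_dvd (x := 1) hdvd

lemma exists_eq_mul_pow_of_pow_two_mul_eq_one [NeZero q] (hodd : Odd q)
    (hω : IsPrimitiveRoot ω q) {x : K} (hx : x ^ (2 * q) = 1) :
    ∃ (u : ℤ) (e : ℕ), (u = 1 ∨ u = -1) ∧ x = u * ω ^ e := by
  have hsign : x ^ q = 1 ∨ x ^ q = -1 := sq_eq_one_iff.mp (by rw [← pow_mul, mul_comm, hx])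
  rcases hsign with h | h
  · obtain ⟨e, -, he⟩ := hω.eq_pow_of_pow_eq_one h
    exact ⟨1, e, .inl rfl, by simp [he]⟩
  · obtain ⟨e, -, he⟩ := hω.eq_pow_of_pow_eq_one (ξ := -x) (by rw [hodd.neg_pow, h, neg_neg])
    exact ⟨-1, e, .inr rfl, by simp [he]⟩

-- Evaluating at `X = 1` a polynomial `∑ ± X ^ e` which vanishes at a primitive `q`-th root of
-- unity gives a multiple of `q`, and it is odd when the number of terms is.
lemma le_card_of_pow_eq_one_of_sum_eq_zero [CharZero K] (hq : q.Prime) (hodd : Odd q)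
    (hω : IsPrimitiveRoot ω q) {s : Multiset K} (hs : ∀ x ∈ s, x ^ (2 * q) = 1)
    (hsum : s.sum = 0) (hcard : Odd s.card) : q ≤ s.card := by
  have : NeZero q := ⟨hq.ne_zero⟩
  choose! u e hu hx using fun x hxs => exists_eq_mul_pow_of_pow_two_mul_eq_one hodd hω (hs x hxs)
  have hdvd : (q : ℤ) ∣ (s.map u).sum := by
    have hF : aeval ω (s.map fun x => C (u x) * X ^ e x).sum = 0 := by
      rw [map_multiset_sum, Multiset.map_map, ← hsum]
      refine congrArg _ ((Multiset.map_congr rfl fun x hxs => ?_).trans s.map_id)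
      simpa using (hx x hxs).symm
    have := dvd_eval_one_of_aeval_primitiveRoot_eq_zero hq hω hF
    rw [← coe_evalRingHom, map_multiset_sum, Multiset.map_map] at this
    simpa using this
  have hne : (s.map u).sum ≠ 0 := by
    have heven : (2 : ℤ) ∣ (s.map fun x => u x - 1).sum := by
      refine Multiset.dvd_sum fun y hy => ?_
      obtain ⟨x, hxs, rfl⟩ := Multiset.mem_map.mp hy
      rcases hu x hxs with h | h <;> simp [h]
    rw [Multiset.sum_map_sub] at heven
    simp only [Multiset.map_const', Multiset.sum_replicate] at heven
    obtain ⟨m, hm⟩ := hcard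
    lia
  have habs : |(s.map u).sum| ≤ s.card := by
    refine (Multiset.abs_sum_le_sum_abs).trans (le_of_eq ?_)
    rw [Multiset.map_map, Multiset.map_congr rfl fun x hxs =>
      show (abs ∘ u) x = 1 by rcases hu x hxs with h | h <;> simp [h]]
    simp
  exact_mod_cast (Int.le_of_dvd (abs_pos.mpr hne) ((dvd_abs _ _).mpr hdvd)).trans habs

end

end RootsOfUnity

section FiniteOrderEndomorphism

open Polynomial Module Finset

variable {k V : Type*} [Field k] [AddCommGroup V] [Module k V]

section CharpolyRoots

variable [FiniteDimensional k V] {K : Type*} [Field K] [Algebra k K] {T : Module.End k V}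

lemma pow_eq_one_of_mem_aroots_charpoly {d : ℕ} (hT : T ^ d = 1) {x : K}
    (hx : x ∈ T.charpoly.aroots K) : x ^ d = 1 := by
  rw [aroots, ← LinearMap.charpoly_baseChange] at hx
  have heig : Module.End.HasEigenvalue (T.baseChange K) x :=
    (Module.End.hasEigenvalue_iff_isRoot_charpoly _ _).mpr (isRoot_of_mem_roots hx)
  obtain ⟨v, hv⟩ := (heig.pow d).exists_hasEigenvector
  have hone : T.baseChange K ^ d = 1 := by
    rw [← LinearMap.baseChange_pow, hT, LinearMap.baseChange_one]
  have hv' := hv.apply_eq_smul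
  rw [hone, Module.End.one_apply] at hv'
  exact smul_left_injective K hv.2 (by simpa using hv'.symm)

variable (K T) [IsAlgClosed K]

lemma card_aroots_charpoly : (T.charpoly.aroots K).card = finrank k V := by
  rw [aroots, IsAlgClosed.card_roots_eq_natDegree, natDegree_map, LinearMap.charpoly_natDegree]

lemma algebraMap_trace_eq_sum_aroots_charpoly :
    algebraMap k K (LinearMap.trace k V T) = (T.charpoly.aroots K).sum := by
  rw [← LinearMap.trace_baseChange, aroots, ← LinearMap.charpoly_baseChange,
    Module.End.trace_eq_sum_roots_charpoly_of_splits (IsAlgClosed.splits _)]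

end CharpolyRoots

/-- The average of the powers `1, X, …, X ^ (d - 1)` of an endomorphism, which for `X ^ d = 1` is
the projection onto the vectors fixed by `X`. -/
noncomputable def powerAverage (X : Module.End k V) (d : ℕ) : Module.End k V :=
  (d : k)⁻¹ • ∑ t ∈ range d, X ^ t

lemma trace_mul_powerAverage (T X : Module.End k V) (d : ℕ) :
    LinearMap.trace k V (T * powerAverage X d) =
      (d : k)⁻¹ * ∑ t ∈ range d, LinearMap.trace k V (T * X ^ t) := by
  rw [powerAverage, mul_smul_comm, map_smul, mul_sum, map_sum, smul_eq_mul]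

lemma mul_powerAverage {X : Module.End k V} {d : ℕ} (hX : X ^ d = 1) :
    X * powerAverage X d = powerAverage X d := by
  have h := mul_geom_sum X d
  rw [hX, sub_self, sub_mul, one_mul, sub_eq_zero] at h
  rw [powerAverage, mul_smul_comm, h]

variable [CharZero k]

lemma isProj_powerAverage {X : Module.End k V} {d : ℕ} (hd : d ≠ 0) (hX : X ^ d = 1) :
    LinearMap.IsProj (Module.End.eigenspace X 1) (powerAverage X d) where
  map_mem v := by
    simpa using LinearMap.congr_fun (mul_powerAverage hX) v
  map_id v hv := by
    have hv : X v = v := by simpa using hv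
    have hpow (t : ℕ) : (X ^ t) v = v := by
      rw [Module.End.pow_apply, Function.iterate_fixed hv]
    simp [powerAverage, hpow, ← Nat.cast_smul_eq_nsmul k, hd, smul_smul]

variable [FiniteDimensional k V]

lemma finrank_eigenspace_one_mul {X : Module.End k V} {d : ℕ} (hd : d ≠ 0) (hX : X ^ d = 1)
    (htr : ∀ t, 0 < t → t < d → LinearMap.trace k V (X ^ t) = 0) :
    finrank k (Module.End.eigenspace X 1) * d = finrank k V := by
  have h := trace_mul_powerAverage 1 X d
  simp only [one_mul] at h
  rw [(isProj_powerAverage hd hX).trace, sum_eq_single_of_mem 0 (by simpa using hd.bot_lt)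
    fun t ht h0 => htr t (Nat.pos_of_ne_zero h0) (mem_range.mp ht), pow_zero, LinearMap.trace_one,
    eq_inv_mul_iff_mul_eq₀ (by exact_mod_cast hd), mul_comm] at h
  exact_mod_cast h

lemma trace_restrict_eigenspace_one {T X : Module.End k V} {d : ℕ} (hd : d ≠ 0) (hX : X ^ d = 1)
    (hT : ∀ v ∈ Module.End.eigenspace X 1, T v ∈ Module.End.eigenspace X 1) :
    LinearMap.trace k _ (T.restrict hT) =
      (d : k)⁻¹ * ∑ t ∈ range d, LinearMap.trace k V (T * X ^ t) := by
  have hproj := isProj_powerAverage hd hX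
  rw [← trace_mul_powerAverage, ← LinearMap.trace_restrict_eq_of_forall_mem
    (Module.End.eigenspace X 1) (T * powerAverage X d) fun v => hT _ (hproj.map_mem v)]
  refine congrArg _ (LinearMap.ext fun v => Subtype.ext ?_)
  exact congrArg T (hproj.map_id v v.2).symm

lemma even_finrank_of_pow_two_eq_one {T : Module.End k V} (hT : T ^ 2 = 1)
    (htr : LinearMap.trace k V T = 0) : Even (finrank k V) := by
  rw [← finrank_eigenspace_one_mul two_ne_zero hT fun t h0 h2 => by
    rwa [show t = 1 by lia, pow_one]]
  exact even_two.mul_left _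

lemma charpoly_eq_of_trace_eq_finrank {T : Module.End k V} {d : ℕ} (hd : d ≠ 0) (hT : T ^ d = 1)
    (htr : LinearMap.trace k V T = finrank k V) : T.charpoly = (X - 1) ^ finrank k V := by
  let K := AlgebraicClosure k
  have : CharZero K := charZero_of_injective_algebraMap (algebraMap k K).injective
  have hroots : (T.charpoly.map (algebraMap k K)).roots = Multiset.replicate (finrank k V) 1 := by
    refine Multiset.eq_replicate.mpr ⟨card_aroots_charpoly K T, fun x hx => ?_⟩
    refine eq_one_of_pow_eq_one_of_sum_eq_card hd
      (fun y hy => pow_eq_one_of_mem_aroots_charpoly hT hy) ?_ hx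
    rw [← algebraMap_trace_eq_sum_aroots_charpoly, htr, card_aroots_charpoly, map_natCast]
  apply map_injective _ (algebraMap k K).injective
  rw [(IsAlgClosed.splits _).eq_prod_roots_of_monic (T.charpoly_monic.map _), hroots]
  simp

lemma eq_one_of_trace_eq_finrank {T : Module.End k V} {d : ℕ} (hd : d ≠ 0) (hT : T ^ d = 1)
    (htr : LinearMap.trace k V T = finrank k V) : T = 1 := by
  cases subsingleton_or_nontrivial V
  · exact Subsingleton.elim _ _
  have hsq : Squarefree (minpoly k T) := by
    have hsep : (X ^ d - 1 : k[X]).Separable :=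
      X_pow_sub_one_separable_iff.mpr (by exact_mod_cast hd)
    exact hsep.squarefree.squarefree_of_dvd (minpoly.dvd _ _ (by simp [hT]))
  have hdvd : minpoly k T ∣ X - 1 := (hsq.dvd_pow_iff_dvd finrank_pos.ne').mp
    (charpoly_eq_of_trace_eq_finrank hd hT htr ▸ T.minpoly_dvd_charpoly)
  simpa [sub_eq_zero] using (minpoly.dvd_iff.mp hdvd)

lemma trace_eq_zero_of_trace_mul_self_eq {T : Module.End k V} {d : ℕ} (hd : d ≠ 0) (hT : T ^ d = 1)
    (hT1 : T ≠ 1)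
    (h : LinearMap.trace k V T * LinearMap.trace k V T = LinearMap.trace k V T * finrank k V) :
    LinearMap.trace k V T = 0 := by
  by_contra h0
  exact hT1 (eq_one_of_trace_eq_finrank hd hT (mul_left_cancel₀ h0 h))

lemma le_finrank_of_trace_eq_zero {T : Module.End k V} {q : ℕ} (hq : q.Prime) (hodd : Odd q)
    (hT : T ^ (2 * q) = 1) (htr : LinearMap.trace k V T = 0) (hV : Odd (finrank k V)) :
    q ≤ finrank k V := by
  let K := AlgebraicClosure k
  have : CharZero K := charZero_of_injective_algebraMap (algebraMap k K).injective
  have : NeZero q := ⟨hq.ne_zero⟩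
  obtain ⟨ω, hω⟩ := HasEnoughRootsOfUnity.exists_primitiveRoot K q
  rw [← card_aroots_charpoly K T] at hV ⊢
  refine le_card_of_pow_eq_one_of_sum_eq_zero hq hodd hω
    (fun x hx => pow_eq_one_of_mem_aroots_charpoly hT hx) ?_ hV
  rw [← algebraMap_trace_eq_sum_aroots_charpoly, htr, map_zero]

lemma finrank_lt_of_trace_restrict_eq_zero {T : Module.End k V} {U W : Submodule k V}
    (hT : ∀ v ∈ W, T v ∈ W) (htr : LinearMap.trace k W (T.restrict hT) = 0) (hUW : U ≤ W)
    (hU : U ≠ ⊥) (hfix : ∀ u ∈ U, T u = u) : finrank k U < finrank k W := by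
  refine Submodule.finrank_lt_finrank_of_lt (hUW.lt_of_ne ?_)
  rintro rfl
  have hone : T.restrict hT = 1 := LinearMap.ext fun u => Subtype.ext (hfix u u.2)
  rw [hone, LinearMap.trace_one, Nat.cast_eq_zero, Submodule.finrank_eq_zero] at htr
  exact hU htr

section Representation

variable {G : Type*} [Monoid G] {ρ : G →* Module.End k V} {x : G} {T : Module.End k V}

lemma finrank_eigenspace_map_mul_orderOf (hx : IsOfFinOrder x)
    (hρ : ∀ y ≠ 1, LinearMap.trace k V (ρ y) = 0) :
    finrank k (Module.End.eigenspace (ρ x) 1) * orderOf x = finrank k V :=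
  finrank_eigenspace_one_mul hx.orderOf_pos.ne'
    (orderOf_dvd_iff_pow_eq_one.mp (orderOf_map_dvd ρ x)) fun t h0 ht => by
      rw [← map_pow]
      exact hρ _ (pow_ne_one_of_lt_orderOf h0.ne' ht)

lemma trace_restrict_eigenspace_map_eq_zero (hx : IsOfFinOrder x)
    (hT : ∀ v ∈ Module.End.eigenspace (ρ x) 1, T v ∈ Module.End.eigenspace (ρ x) 1)
    (hTρ : ∀ y, LinearMap.trace k V (T * ρ y) = 0) :
    LinearMap.trace k _ (T.restrict hT) = 0 := by
  rw [trace_restrict_eigenspace_one hx.orderOf_pos.ne'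
    (orderOf_dvd_iff_pow_eq_one.mp (orderOf_map_dvd ρ x))]
  simp only [← map_pow, hTρ, sum_const_zero, mul_zero]

lemma mul_orderOf_le_finrank {q : ℕ} (hq : q.Prime) (hodd : Odd q) (hV : Odd (finrank k V))
    (hx : IsOfFinOrder x) (hρ : ∀ y ≠ 1, LinearMap.trace k V (ρ y) = 0)
    (hcomm : Commute (ρ x) T) (hTq : T ^ (2 * q) = 1)
    (hTρ : ∀ y, LinearMap.trace k V (T * ρ y) = 0) : q * orderOf x ≤ finrank k V := by
  have hT : ∀ v ∈ Module.End.eigenspace (ρ x) 1, T v ∈ Module.End.eigenspace (ρ x) 1 :=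
    fun _ hv => Module.End.mapsTo_genEigenspace_of_comm hcomm 1 1 hv
  have hfinrank := finrank_eigenspace_map_mul_orderOf hx hρ
  rw [← hfinrank] at hV ⊢
  refine Nat.mul_le_mul_right _ (le_finrank_of_trace_eq_zero (T := T.restrict hT) hq hodd ?_
    (trace_restrict_eigenspace_map_eq_zero hx hT hTρ) (Nat.odd_mul.mp hV).1)
  rw [Module.End.pow_restrict]
  exact LinearMap.ext fun v => Subtype.ext (LinearMap.congr_fun hTq v)

end Representation

end FiniteOrderEndomorphism

section Convolution

open Coalgebra HopfAlgebra WithConv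

variable {k H C : Type*} [CommSemiring k] [Semiring H] [HopfAlgebra k H] [Semiring C] [Algebra k C]

lemma convMul_comp_antipode (F : H →ₐ[k] C) :
    toConv F.toLinearMap * toConv (F.toLinearMap ∘ₗ antipode k) = 1 := by
  have h := LinearMap.algHom_comp_convMul_distrib F (toConv .id) (toConv (antipode k (A := H)))
  rw [LinearMap.id_mul_antipode, ofConv_toConv, ofConv_toConv, LinearMap.comp_id] at h
  apply ofConv_injective
  rw [← h]
  ext x
  simp

lemma comp_antipode_convMul (F : H →ₐ[k] C) :
    toConv (F.toLinearMap ∘ₗ antipode k) * toConv F.toLinearMap = 1 := by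
  have h := LinearMap.algHom_comp_convMul_distrib F (toConv (antipode k (A := H))) (toConv .id)
  rw [LinearMap.antipode_mul_id, ofConv_toConv, ofConv_toConv, LinearMap.comp_id] at h
  apply ofConv_injective
  rw [← h]
  ext x
  simp

variable (k H) in
lemma toConv_comul :
    toConv (comul (R := k) (A := H)) =
      toConv (Algebra.TensorProduct.includeLeft (R := k) (S := k) (A := H) (B := H)).toLinearMap *
      toConv (Algebra.TensorProduct.includeRight (R := k) (A := H) (B := H)).toLinearMap := by
  ext x
  rw [(ℛ k x).convMul_apply]
  simp [(ℛ k x).eq]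

lemma sum_antipode_tmul_one_mul_comul {ι : Type*} {x : H} (r : Repr k x ι) :
    ∑ i ∈ r.index, (antipode k (r.left i) ⊗ₜ[k] (1 : H)) * comul (r.right i) = 1 ⊗ₜ[k] x := by
  let F := Algebra.TensorProduct.includeLeft (R := k) (S := k) (A := H) (B := H)
  let G := Algebra.TensorProduct.includeRight (R := k) (A := H) (B := H)
  have h : toConv (F.toLinearMap ∘ₗ antipode k) * toConv comul = toConv G.toLinearMap := by
    rw [toConv_comul, ← mul_assoc, comp_antipode_convMul, one_mul]
  simpa [r.convMul_apply, F, G] using congrArg (fun φ => φ.ofConv x) h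

lemma sum_comul_mul_one_tmul_antipode {ι : Type*} {x : H} (r : Repr k x ι) :
    ∑ i ∈ r.index, comul (r.left i) * ((1 : H) ⊗ₜ[k] antipode k (r.right i)) = x ⊗ₜ[k] 1 := by
  let F := Algebra.TensorProduct.includeRight (R := k) (A := H) (B := H)
  let G := Algebra.TensorProduct.includeLeft (R := k) (S := k) (A := H) (B := H)
  have h : toConv comul * toConv (F.toLinearMap ∘ₗ antipode k) = toConv G.toLinearMap := by
    rw [toConv_comul, mul_assoc, convMul_comp_antipode, mul_one]
  simpa [r.convMul_apply, F, G] using congrArg (fun φ => φ.ofConv x) h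

end Convolution

section Characters

open Coalgebra HopfAlgebra WithConv

variable {k H C : Type*} [CommSemiring k] [Semiring H] [HopfAlgebra k H] [Semiring C] [Algebra k C]

/-- The group of characters of `H`, that is, of group-like elements of `H*`, under convolution. -/
abbrev CharacterGroup (k H : Type*) [CommSemiring k] [Semiring H] [HopfAlgebra k H] : Type _ :=
  WithConv (H →ₐ[k] k)

namespace CharacterGroup

noncomputable instance : Inv (CharacterGroup k H) where
  inv β := toConv <| AlgHom.ofLinearMap (β.ofConv.toLinearMap ∘ₗ antipode k) (by simp)
    fun x y => by simp [antipode_mul_antidistrib, mul_comm]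

noncomputable instance : Group (CharacterGroup k H) where
  inv_mul_cancel β := by
    apply ofConv_injective
    apply AlgHom.toLinearMap_injective
    apply toConv_injective
    exact comp_antipode_convMul β.ofConv

instance {k H : Type*} [Field k] [Ring H] [HopfAlgebra k H] [FiniteDimensional k H] :
    Finite (CharacterGroup k H) :=
  have : Finite (H →ₐ[k] k) := (linearIndependent_algHom_toLinearMap k H k).finite
  Finite.of_injective ofConv ofConv_injective

variable (C) in
/-- A character of `H`, seen as an element of the convolution algebra of linear maps `H → C`. -/
noncomputable def toLinear : CharacterGroup k H →* WithConv (H →ₗ[k] C) where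
  toFun β := toConv (Algebra.linearMap k C ∘ₗ β.ofConv.toLinearMap)
  map_one' := rfl
  map_mul' β γ := ofConv_injective <|
    LinearMap.algHom_comp_convMul_distrib (Algebra.ofId k C) (toConv β.ofConv.toLinearMap)
      (toConv γ.ofConv.toLinearMap)

@[simp] lemma toLinear_apply (β : CharacterGroup k H) (x : H) :
    toLinear C β x = algebraMap k C (β x) := rfl

end CharacterGroup

open CharacterGroup

/-- The algebra map `x ↦ x₁ β(x₂)` attached to a character `β`. -/
noncomputable def rightWinding (β : CharacterGroup k H) : H →ₐ[k] H :=
  (Algebra.TensorProduct.lift (AlgHom.id k H) ((Algebra.ofId k H).comp β.ofConv)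
    fun _ _ => (Algebra.commutes _ _).symm).comp (Bialgebra.comulAlgHom k H)

/-- The algebra map `x ↦ β(x₁) x₂` attached to a character `β`. -/
noncomputable def leftWinding (β : CharacterGroup k H) : H →ₐ[k] H :=
  (Algebra.TensorProduct.lift ((Algebra.ofId k H).comp β.ofConv) (AlgHom.id k H)
    fun _ _ => Algebra.commutes _ _).comp (Bialgebra.comulAlgHom k H)

lemma rightWinding_apply (β : CharacterGroup k H) {ι : Type*} {x : H} (r : Repr k x ι) :
    rightWinding β x = ∑ i ∈ r.index, β (r.right i) • r.left i := by
  simp only [rightWinding, AlgHom.comp_apply, Bialgebra.comulAlgHom_apply, ← r.eq, map_sum]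
  refine Finset.sum_congr rfl fun i _ => (Algebra.TensorProduct.lift_tmul _ _ _ _ _).trans ?_
  simp [Algebra.smul_def, Algebra.commutes, Algebra.ofId_apply]

lemma leftWinding_apply (β : CharacterGroup k H) {ι : Type*} {x : H} (r : Repr k x ι) :
    leftWinding β x = ∑ i ∈ r.index, β (r.left i) • r.right i := by
  simp only [leftWinding, AlgHom.comp_apply, Bialgebra.comulAlgHom_apply, ← r.eq, map_sum]
  refine Finset.sum_congr rfl fun i _ => (Algebra.TensorProduct.lift_tmul _ _ _ _ _).trans ?_
  simp [Algebra.smul_def, Algebra.ofId_apply]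

lemma toConv_comp_rightWinding (φ : H →ₗ[k] C) (β : CharacterGroup k H) :
    toConv (φ ∘ₗ (rightWinding β).toLinearMap) = toConv φ * toLinear C β := by
  ext x
  rw [(ℛ k x).convMul_apply]
  simp only [LinearMap.comp_apply, AlgHom.toLinearMap_apply, rightWinding_apply β (ℛ k x),
    map_sum, map_smul]
  simp [Algebra.smul_def, Algebra.commutes]

lemma toConv_comp_leftWinding (φ : H →ₗ[k] C) (β : CharacterGroup k H) :
    toConv (φ ∘ₗ (leftWinding β).toLinearMap) = toLinear C β * toConv φ := by
  ext x
  rw [(ℛ k x).convMul_apply]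
  simp only [LinearMap.comp_apply, AlgHom.toLinearMap_apply, leftWinding_apply β (ℛ k x),
    map_sum, map_smul]
  simp [Algebra.smul_def]

lemma toConv_rightWinding (β : CharacterGroup k H) :
    toConv (rightWinding β).toLinearMap = toConv LinearMap.id * toLinear H β :=
  toConv_comp_rightWinding .id β

lemma toConv_leftWinding (β : CharacterGroup k H) :
    toConv (leftWinding β).toLinearMap = toLinear H β * toConv LinearMap.id :=
  toConv_comp_leftWinding .id β

/-- The action of the character group on `H` by right windings. -/
noncomputable def rightWindingHom : CharacterGroup k H →* Module.End k H where
  toFun β := (rightWinding β).toLinearMap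
  map_one' := toConv_injective <| by rw [toConv_rightWinding, map_one, mul_one]; rfl
  map_mul' β γ := toConv_injective <| by
    rw [Module.End.mul_eq_comp, toConv_comp_rightWinding, toConv_rightWinding, toConv_rightWinding,
      map_mul, mul_assoc]

/-- The action of the character group on `H` by left windings; they reverse products, hence the
inverse. -/
noncomputable def leftWindingHom : CharacterGroup k H →* Module.End k H where
  toFun β := (leftWinding β⁻¹).toLinearMap
  map_one' := toConv_injective <| by rw [toConv_leftWinding, inv_one, map_one, one_mul]; rfl
  map_mul' β γ := toConv_injective <| by
    rw [Module.End.mul_eq_comp, toConv_comp_leftWinding, toConv_leftWinding, toConv_leftWinding,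
      mul_inv_rev, map_mul, mul_assoc]

@[simp] lemma rightWindingHom_apply (β : CharacterGroup k H) (x : H) :
    rightWindingHom β x = rightWinding β x := rfl

@[simp] lemma leftWindingHom_apply (β : CharacterGroup k H) (x : H) :
    leftWindingHom β x = leftWinding β⁻¹ x := rfl

lemma leftWinding_leftWinding_inv (β : CharacterGroup k H) (x : H) :
    leftWinding β (leftWinding β⁻¹ x) = x := by
  have h : leftWindingHom β⁻¹ * leftWindingHom β = (1 : Module.End k H) := by
    rw [← map_mul, inv_mul_cancel, map_one]
  simpa using LinearMap.congr_fun h x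

lemma commute_rightWindingHom_leftWindingHom (β γ : CharacterGroup k H) :
    Commute (rightWindingHom β) (leftWindingHom γ) := toConv_injective <| by
  change toConv ((rightWinding β).toLinearMap ∘ₗ (leftWinding γ⁻¹).toLinearMap) =
    toConv ((leftWinding γ⁻¹).toLinearMap ∘ₗ (rightWinding β).toLinearMap)
  rw [toConv_comp_leftWinding, toConv_comp_rightWinding, toConv_leftWinding, toConv_rightWinding,
    mul_assoc]

lemma leftWinding_antipode (β : CharacterGroup k H) (x : H) :
    leftWinding β (antipode k x) = antipode k (rightWinding β⁻¹ x) := by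
  have h : toConv (antipode k ∘ₗ (rightWinding β⁻¹).toLinearMap) =
      toConv ((leftWinding β).toLinearMap ∘ₗ antipode k) := by
    refine left_inv_eq_right_inv (a := toConv (leftWinding β).toLinearMap) ?_
      (convMul_comp_antipode _)
    rw [toConv_comp_rightWinding, toConv_leftWinding, mul_assoc, ← mul_assoc (toLinear H _),
      ← map_mul, inv_mul_cancel, map_one, one_mul, LinearMap.antipode_mul_id]
  exact (LinearMap.congr_fun (toConv_injective h) x).symm

lemma rightWinding_antipode (β : CharacterGroup k H) (x : H) :
    rightWinding β (antipode k x) = antipode k (leftWinding β⁻¹ x) := by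
  have h : toConv (antipode k ∘ₗ (leftWinding β⁻¹).toLinearMap) =
      toConv ((rightWinding β).toLinearMap ∘ₗ antipode k) := by
    refine left_inv_eq_right_inv (a := toConv (rightWinding β).toLinearMap) ?_
      (convMul_comp_antipode _)
    rw [toConv_comp_leftWinding, toConv_rightWinding, mul_assoc, ← mul_assoc (toConv (antipode k)),
      LinearMap.antipode_mul_id, one_mul, ← map_mul, inv_mul_cancel, map_one]
  exact (LinearMap.congr_fun (toConv_injective h) x).symm

/-- The square of the antipode. -/
noncomputable abbrev antipodeSq (k H : Type*) [CommSemiring k] [Semiring H] [HopfAlgebra k H] :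
    Module.End k H :=
  antipode k ^ 2

lemma antipodeSq_apply (x : H) : antipodeSq k H x = antipode k (antipode k x) := rfl

lemma commute_rightWindingHom_antipodeSq (β : CharacterGroup k H) :
    Commute (rightWindingHom β) (antipodeSq k H) := LinearMap.ext fun x => by
  simp [antipodeSq_apply, rightWinding_antipode, leftWinding_antipode]

lemma commute_leftWindingHom_antipodeSq (β : CharacterGroup k H) :
    Commute (leftWindingHom β) (antipodeSq k H) := LinearMap.ext fun x => by
  simp [antipodeSq_apply, rightWinding_antipode, leftWinding_antipode]

lemma sum_antipode_leftWinding_mul (β : CharacterGroup k H) {ι : Type*} {x : H} (r : Repr k x ι) :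
    ∑ i ∈ r.index, antipode k (leftWinding β (r.left i)) * r.right i = β x • 1 := by
  have h : toConv (antipode k ∘ₗ (leftWinding β).toLinearMap) * toConv LinearMap.id =
      toLinear H β := by
    rw [toConv_comp_leftWinding, mul_assoc, LinearMap.antipode_mul_id, mul_one]
  have := congrArg (fun φ => φ.ofConv x) h
  simpa [r.convMul_apply, Algebra.algebraMap_eq_smul_one] using this

lemma comul_rightWinding (β : CharacterGroup k H) (x : H) :
    comul (R := k) (rightWinding β x) =
      Algebra.TensorProduct.map (AlgHom.id k H) (rightWinding β) (comul x) := by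
  let F := Algebra.TensorProduct.map (AlgHom.id k H) (rightWinding β)
  have h : toConv (comul ∘ₗ (rightWinding β).toLinearMap) = toConv (F.toLinearMap ∘ₗ comul) := by
    have hF := LinearMap.algHom_comp_convMul_distrib F
      (toConv (Algebra.TensorProduct.includeLeft (R := k) (S := k) (A := H) (B := H)).toLinearMap)
      (toConv (Algebra.TensorProduct.includeRight (R := k) (A := H) (B := H)).toLinearMap)
    rw [← toConv_comul] at hF
    rw [toConv_comp_rightWinding, hF, toConv_comul, mul_assoc, ← toConv_comp_rightWinding]
    congr 1
    ext; simp [F]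
  exact LinearMap.congr_fun (toConv_injective h) x

lemma counit_rightWinding (β : CharacterGroup k H) (x : H) :
    counit (R := k) (rightWinding β x) = β x := by
  have h := toConv_comp_rightWinding (counit (R := k) (A := H)) β
  exact (LinearMap.congr_fun (toConv_injective (h.trans (one_mul _))) x)

end Characters

section Contraction

open Coalgebra

variable {k A B : Type*} [CommSemiring k] [Semiring A] [Algebra k A] [Semiring B] [Algebra k B]

/-- The contraction `x ⊗ y ↦ f(x) y` of the first tensor factor against a functional. -/
noncomputable def contractFst (f : A →ₗ[k] k) : A ⊗[k] B →ₗ[k] B :=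
  (TensorProduct.lid k B).toLinearMap ∘ₗ f.rTensor B

/-- The contraction `x ⊗ y ↦ f(y) x` of the second tensor factor against a functional. -/
noncomputable def contractSnd (f : B →ₗ[k] k) : A ⊗[k] B →ₗ[k] A :=
  (TensorProduct.rid k A).toLinearMap ∘ₗ f.lTensor A

@[simp] lemma contractFst_tmul (f : A →ₗ[k] k) (x : A) (y : B) :
    contractFst f (x ⊗ₜ y) = f x • y := by simp [contractFst]

@[simp] lemma contractSnd_tmul (f : B →ₗ[k] k) (x : A) (y : B) :
    contractSnd f (x ⊗ₜ y) = f y • x := by simp [contractSnd]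

lemma contractFst_mul_tmul (f : A →ₗ[k] k) (t : A ⊗[k] B) (a : A) (b : B) :
    contractFst f (t * (a ⊗ₜ b)) = contractFst (f ∘ₗ LinearMap.mulRight k a) t * b := by
  induction t with
  | zero => simp
  | tmul x y => simp
  | add x y hx hy => simp [add_mul, hx, hy]

lemma contractFst_tmul_mul (f : A →ₗ[k] k) (t : A ⊗[k] B) (a : A) (b : B) :
    contractFst f ((a ⊗ₜ b) * t) = b * contractFst (f ∘ₗ LinearMap.mulLeft k a) t := by
  induction t with
  | zero => simp
  | tmul x y => simp
  | add x y hx hy => simp [mul_add, hx, hy]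

lemma contractSnd_mul_tmul (f : B →ₗ[k] k) (t : A ⊗[k] B) (a : A) (b : B) :
    contractSnd f (t * (a ⊗ₜ b)) = contractSnd (f ∘ₗ LinearMap.mulRight k b) t * a := by
  induction t with
  | zero => simp
  | tmul x y => simp
  | add x y hx hy => simp [add_mul, hx, hy]

lemma contractSnd_tmul_mul (f : B →ₗ[k] k) (t : A ⊗[k] B) (a : A) (b : B) :
    contractSnd f ((a ⊗ₜ b) * t) = a * contractSnd (f ∘ₗ LinearMap.mulLeft k b) t := by
  induction t with
  | zero => simp
  | tmul x y => simp
  | add x y hx hy => simp [mul_add, hx, hy]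

variable [Coalgebra k A]

lemma contractFst_comul (f : A →ₗ[k] k) {ι : Type*} {x : A} (r : Repr k x ι) :
    contractFst f (comul x) = ∑ i ∈ r.index, f (r.left i) • r.right i := by
  simp [← r.eq]

lemma contractSnd_comul (f : A →ₗ[k] k) {ι : Type*} {x : A} (r : Repr k x ι) :
    contractSnd f (comul x) = ∑ i ∈ r.index, f (r.right i) • r.left i := by
  simp [← r.eq]

lemma apply_contractFst_comul (f l : Module.Dual k A) (x : A) :
    f (contractFst l (comul x)) = conv l f x := by
  simp [conv, ← (ℛ k x).eq]

lemma apply_contractSnd_comul (f l : Module.Dual k A) (x : A) :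
    f (contractSnd l (comul x)) = conv f l x := by
  simp [conv, ← (ℛ k x).eq, mul_comm]

end Contraction

section Integrals

open Coalgebra HopfAlgebra WithConv

variable {k H : Type*} [Field k] [Ring H] [HopfAlgebra k H]

namespace IsRightIntegralDual

variable {l : Module.Dual k H}

lemma contractFst_comul_eq (hl : IsRightIntegralDual k l) (x : H) :
    contractFst l (comul x) = l x • (1 : H) := by
  rw [← sub_eq_zero, ← Module.forall_dual_apply_eq_zero_iff k]
  intro f
  rw [map_sub, apply_contractFst_comul, hl f]
  simp [mul_comm]

lemma contractFst_comp_mulRight_comul (hl : IsRightIntegralDual k l) (x : H) {ι : Type*} {y : H}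
    (r : Repr k y ι) : contractFst (l ∘ₗ LinearMap.mulRight k y) (comul x) =
      ∑ i ∈ r.index, l (x * r.left i) • antipode k (r.right i) := by
  rw [← mul_one (contractFst _ _), ← contractFst_mul_tmul, ← sum_comul_mul_one_tmul_antipode r,
    Finset.mul_sum, map_sum]
  refine Finset.sum_congr rfl fun i _ => ?_
  rw [← mul_assoc, ← Bialgebra.comul_mul, contractFst_mul_tmul, LinearMap.mulRight_one,
    LinearMap.comp_id, hl.contractFst_comul_eq, smul_mul_assoc, one_mul]

-- The left radical of `(x, y) ↦ l(xy)` is a right coideal.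
lemma exists_repr_apply_left_mul_eq_zero (hl : IsRightIntegralDual k l) {x : H}
    (hx : ∀ y, l (x * y) = 0) :
    ∃ r : Repr k x (Module.Free.ChooseBasisIndex k H),
      ∀ i ∈ r.index, ∀ y, l (r.left i * y) = 0 := by
  let b := Module.Free.chooseBasis k H
  obtain ⟨a, ha⟩ := TensorProduct.eq_repr_basis_right b (comul (R := k) x)
  let r : Repr k x _ := ⟨a.support, a, b, ha⟩
  have hsum (y : H) : ∑ i ∈ r.index, l (r.left i * y) • b i = 0 := by
    refine (contractFst_comul (l ∘ₗ LinearMap.mulRight k y) r).symm.trans ?_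
    simp [hl.contractFst_comp_mulRight_comul x (ℛ k y), hx]
  exact ⟨r, fun i hi y => linearIndependent_iff'.mp b.linearIndependent _ _ (hsum y) i hi⟩

lemma counit_eq_zero_of_forall_apply_mul_eq_zero (hl : IsRightIntegralDual k l) (hl0 : l ≠ 0)
    {x : H} (hx : ∀ y, l (x * y) = 0) : counit (R := k) x = 0 := by
  obtain ⟨y, hy⟩ : ∃ y, l y ≠ 0 := by
    by_contra! h
    exact hl0 (LinearMap.ext h)
  obtain ⟨r, hr⟩ := hl.exists_repr_apply_left_mul_eq_zero hx
  have h : counit (R := k) x * l y = 0 := calc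
    counit (R := k) x * l y = l ((∑ i ∈ r.index, r.left i * antipode k (r.right i)) * y) := by
      rw [sum_mul_antipode_eq_smul, smul_one_mul, map_smul, smul_eq_mul]
    _ = 0 := by
      rw [Finset.sum_mul, map_sum]
      exact Finset.sum_eq_zero fun i hi => by rw [mul_assoc, hr i hi]
  exact (mul_eq_zero.mp h).resolve_right hy

lemma eq_zero_of_forall_apply_mul_eq_zero (hl : IsRightIntegralDual k l) (hl0 : l ≠ 0) {x : H}
    (hx : ∀ y, l (x * y) = 0) : x = 0 := by
  obtain ⟨r, hr⟩ := hl.exists_repr_apply_left_mul_eq_zero hx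
  rw [← sum_counit_smul r]
  exact Finset.sum_eq_zero fun i hi => by
    rw [hl.counit_eq_zero_of_forall_apply_mul_eq_zero hl0 (hr i hi), zero_smul]

variable [FiniteDimensional k H]

lemma isPerfPair_mul (hl : IsRightIntegralDual k l) (hl0 : l ≠ 0) :
    ((LinearMap.mul k H).compr₂ l).IsPerfPair := by
  refine .of_bijective _ ?_
  have hinj : Function.Injective ((LinearMap.mul k H).compr₂ l) :=
    (injective_iff_map_eq_zero _).mpr fun x hx =>
      hl.eq_zero_of_forall_apply_mul_eq_zero hl0 fun y => LinearMap.congr_fun hx y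
  exact ⟨hinj, (LinearMap.injective_iff_surjective_of_finrank_eq_finrank
    Subspace.dual_finrank_eq.symm).mp hinj⟩

lemma exists_eq_comp_mulRight (hl : IsRightIntegralDual k l) (hl0 : l ≠ 0)
    (f : Module.Dual k H) : ∃ y, f = l ∘ₗ LinearMap.mulRight k y := by
  obtain ⟨y, rfl⟩ := (hl.isPerfPair_mul hl0).bijective_right.surjective f
  exact ⟨y, rfl⟩

lemma eq_of_forall_apply_mul_eq (hl : IsRightIntegralDual k l) (hl0 : l ≠ 0) {y z : H}
    (h : ∀ x, l (x * y) = l (x * z)) : y = z :=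
  (hl.isPerfPair_mul hl0).bijective_right.injective (LinearMap.ext h)

end IsRightIntegralDual

lemma IsGroupLike.isGroupLikeElem {a : H} (ha : IsGroupLike k a) : IsGroupLikeElem k a := by
  refine ⟨?_, ha.2⟩
  have h := congrArg (TensorProduct.lid k H) (rTensor_counit_comul (R := k) a)
  rw [ha.2, LinearMap.rTensor_tmul, TensorProduct.lid_tmul, TensorProduct.lid_tmul, one_smul] at h
  exact smul_left_injective k ha.1 (h.trans (one_smul k a).symm)

/-- Integrals `l` of `H*` and `L` of `H`, normalized by `l(L) = 1`, together with the
distinguished group-like elements `g` of `H` and `α` of `H*` through which `H*` and `H` act on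
their other side. -/
structure IsIntegralPair (l : Module.Dual k H) (L : H) (g : GroupLike k H)
    (α : CharacterGroup k H) : Prop where
  isRightIntegralDual : IsRightIntegralDual k l
  conv_eq : ∀ f : Module.Dual k H, conv f l = f g • l
  isLeftIntegral : IsLeftIntegral k L
  mul_eq : ∀ a : H, L * a = α a • L
  apply_eq_one : l L = 1

variable [FiniteDimensional k H]

lemma IsDistinguishedGroupLike.exists_isIntegralPair {g : H}
    (hg : IsDistinguishedGroupLike k g) :
    ∃ (l : Module.Dual k H) (L : H) (γ : GroupLike k H) (α : CharacterGroup k H),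
      γ.val = g ∧ IsIntegralPair l L γ α := by
  obtain ⟨hgl, l, hl0, hl, hconv⟩ := hg
  obtain ⟨L, hL⟩ := hl.exists_eq_comp_mulRight hl0 counit
  have hL (x : H) : l (x * L) = counit (R := k) x := (LinearMap.congr_fun hL x).symm
  have hleft : IsLeftIntegral k L := fun a => hl.eq_of_forall_apply_mul_eq hl0 fun x => by
    rw [← mul_assoc, hL, mul_smul_comm, map_smul, hL, Bialgebra.counit_mul, smul_eq_mul, mul_comm]
  have hone : l L = 1 := by rw [← one_mul L, hL, Bialgebra.counit_one]
  have hright (a : H) : L * a = l (L * a) • L := hl.eq_of_forall_apply_mul_eq hl0 fun x => by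
    rw [← mul_assoc, hleft, smul_mul_assoc, map_smul, mul_smul_comm, map_smul, hleft, map_smul,
      hone, smul_eq_mul, smul_eq_mul, smul_eq_mul, mul_one, mul_comm]
  let α : H →ₐ[k] k := AlgHom.ofLinearMap (l ∘ₗ LinearMap.mulLeft k L) (by simp [hone])
    fun x y => by
      simp only [LinearMap.comp_apply, LinearMap.mulLeft_apply]
      rw [← mul_assoc, hright x, smul_mul_assoc, map_smul, map_smul, hone, smul_eq_mul,
        smul_eq_mul, mul_one]
  exact ⟨l, L, ⟨g, hgl.isGroupLikeElem⟩, toConv α, rfl, hl, hconv, hleft, hright, hone⟩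

end Integrals

section GroupLikeActions

open Coalgebra HopfAlgebra

variable {k H : Type*} [Field k] [Ring H] [HopfAlgebra k H]

/-- The action of the group-like elements on `H` by left multiplication. -/
noncomputable def mulLeftHom : GroupLike k H →* Module.End k H :=
  (Algebra.lmul k H).toMonoidHom.comp (GroupLike.valMonoidHom k H)

/-- The action of the group-like elements on `H` by conjugation. -/
noncomputable def conjHom : GroupLike k H →* Module.End k H where
  toFun c := LinearMap.mulLeftRight k (c.val, c⁻¹.val)
  map_one' := by ext; simp
  map_mul' c d := by ext; simp [mul_assoc]

@[simp] lemma mulLeftHom_apply (c : GroupLike k H) (x : H) : mulLeftHom c x = c * x := rfl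

lemma conjHom_apply (c : GroupLike k H) (x : H) : conjHom c x = c * x * c⁻¹.val := rfl

lemma rightWinding_groupLike (β : CharacterGroup k H) (c : GroupLike k H) :
    rightWinding β (c : H) = β c • (c : H) := by
  let r : Repr k (c : H) Unit := ⟨{()}, fun _ => c, fun _ => c,
    by simp [c.isGroupLikeElem_val.comul_eq_tmul_self]⟩
  simp [rightWinding_apply β r, r]

lemma leftWinding_groupLike (β : CharacterGroup k H) (c : GroupLike k H) :
    leftWinding β (c : H) = β c • (c : H) := by
  let r : Repr k (c : H) Unit := ⟨{()}, fun _ => c, fun _ => c,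
    by simp [c.isGroupLikeElem_val.comul_eq_tmul_self]⟩
  simp [leftWinding_apply β r, r]

lemma antipodeSq_groupLike (c : GroupLike k H) : antipodeSq k H (c : H) = c :=
  c.isGroupLikeElem_val.antipode_antipode

lemma antipodeSq_mul (x y : H) : antipodeSq k H (x * y) = antipodeSq k H x * antipodeSq k H y := by
  simp [antipodeSq_apply, antipode_mul_antidistrib]

lemma apply_mul_apply_inv_groupLike (β : CharacterGroup k H) (c : GroupLike k H) :
    β c * β c⁻¹.val = 1 := by
  rw [← map_mul, ← GroupLike.val_mul, mul_inv_cancel, GroupLike.val_one, map_one]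

lemma commute_rightWindingHom_conjHom (β : CharacterGroup k H) (c : GroupLike k H) :
    Commute (rightWindingHom β) (conjHom c) := LinearMap.ext fun x => by
  simp only [Module.End.mul_apply, conjHom_apply, rightWindingHom_apply, map_mul,
    rightWinding_groupLike, smul_mul_assoc, smul_smul, mul_smul_comm]
  rw [mul_comm, apply_mul_apply_inv_groupLike, one_smul]

lemma commute_leftWindingHom_conjHom (β : CharacterGroup k H) (c : GroupLike k H) :
    Commute (leftWindingHom β) (conjHom c) := LinearMap.ext fun x => by
  simp only [Module.End.mul_apply, conjHom_apply, leftWindingHom_apply, map_mul,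
    leftWinding_groupLike, smul_mul_assoc, smul_smul, mul_smul_comm]
  rw [mul_comm, apply_mul_apply_inv_groupLike, one_smul]

lemma commute_mulLeftHom_antipodeSq (c : GroupLike k H) :
    Commute (mulLeftHom c) (antipodeSq k H) := LinearMap.ext fun x => by
  simp only [Module.End.mul_apply, mulLeftHom_apply, antipodeSq_mul, antipodeSq_groupLike]

lemma commute_conjHom_antipodeSq (c : GroupLike k H) :
    Commute (conjHom c) (antipodeSq k H) := LinearMap.ext fun x => by
  simp only [Module.End.mul_apply, conjHom_apply, antipodeSq_mul, antipodeSq_groupLike]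

end GroupLikeActions

section Radford

open Coalgebra HopfAlgebra

variable {k H : Type*} [Field k] [Ring H] [HopfAlgebra k H]

lemma IsLeftIntegral.one_tmul_mul_comul {L : H} (hL : IsLeftIntegral k L) (a : H) :
    ((1 : H) ⊗ₜ[k] a) * comul L = (antipode k a ⊗ₜ[k] (1 : H)) * comul L := by
  let r := ℛ k a
  have hr : ∑ i ∈ r.index, counit (R := k) (r.right i) • r.left i = a := by
    rw [← contractSnd_comul, contractSnd, LinearMap.comp_apply, lTensor_counit_comul]
    simp
  calc ((1 : H) ⊗ₜ[k] a) * comul L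
      = ∑ i ∈ r.index, (antipode k (r.left i) ⊗ₜ[k] (1 : H)) * comul (r.right i * L) := by
        rw [← sum_antipode_tmul_one_mul_comul r, Finset.sum_mul]
        simp only [mul_assoc, Bialgebra.comul_mul]
    _ = (antipode k (∑ i ∈ r.index, counit (R := k) (r.right i) • r.left i) ⊗ₜ[k] (1 : H)) *
          comul L := by
        rw [map_sum, TensorProduct.sum_tmul, Finset.sum_mul]
        refine Finset.sum_congr rfl fun i _ => ?_
        rw [hL, map_smul, map_smul, ← TensorProduct.smul_tmul', smul_mul_assoc, mul_smul_comm]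
    _ = (antipode k a ⊗ₜ[k] (1 : H)) * comul L := by rw [hr]

namespace IsIntegralPair

variable {l : Module.Dual k H} {L : H} {γ : GroupLike k H} {α : CharacterGroup k H}

lemma ne_zero (D : IsIntegralPair l L γ α) : l ≠ 0 := by
  rintro rfl
  exact zero_ne_one D.apply_eq_one

lemma comul_mul_tmul_one (D : IsIntegralPair l L γ α) (a : H) :
    comul L * (a ⊗ₜ[k] (1 : H)) = comul L * ((1 : H) ⊗ₜ[k] antipode k (leftWinding α a)) := by
  rw [← sum_comul_mul_one_tmul_antipode (ℛ k a), leftWinding_apply _ (ℛ k a), map_sum,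
    TensorProduct.tmul_sum, Finset.mul_sum, Finset.mul_sum]
  refine Finset.sum_congr rfl fun i _ => ?_
  rw [← mul_assoc, ← Bialgebra.comul_mul, D.mul_eq]
  simp

lemma contractFst_comul (D : IsIntegralPair l L γ α) :
    contractFst l (comul L) = (1 : H) := by
  rw [D.isRightIntegralDual.contractFst_comul_eq, D.apply_eq_one, one_smul]

lemma contractSnd_comul (D : IsIntegralPair l L γ α) : contractSnd l (comul L) = (γ : H) := by
  rw [← sub_eq_zero, ← Module.forall_dual_apply_eq_zero_iff k]
  intro f
  rw [map_sub, apply_contractSnd_comul, D.conv_eq, LinearMap.smul_apply, D.apply_eq_one,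
    smul_eq_mul, mul_one, sub_self]

lemma contractSnd_mulLeft_comul (D : IsIntegralPair l L γ α) (x : H) :
    contractSnd (l ∘ₗ LinearMap.mulLeft k x) (comul L) = antipode k x * γ := by
  rw [← one_mul (contractSnd _ _), ← contractSnd_tmul_mul, D.isLeftIntegral.one_tmul_mul_comul,
    contractSnd_tmul_mul, LinearMap.mulLeft_one, LinearMap.comp_id, D.contractSnd_comul]

lemma contractSnd_mulRight_antipode_comul (D : IsIntegralPair l L γ α) (x : H) :
    contractSnd (l ∘ₗ LinearMap.mulRight k (antipode k x)) (comul L) =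
      γ * leftWinding α⁻¹ x := by
  conv_lhs => rw [← leftWinding_leftWinding_inv α x, ← mul_one (contractSnd _ _)]
  rw [← contractSnd_mul_tmul, ← D.comul_mul_tmul_one,
    contractSnd_mul_tmul, LinearMap.mulRight_one, LinearMap.comp_id, D.contractSnd_comul]

lemma contractFst_mulLeft_antipode_comul (D : IsIntegralPair l L γ α) (x : H) :
    contractFst (l ∘ₗ LinearMap.mulLeft k (antipode k x)) (comul L) = x := by
  rw [← one_mul (contractFst _ _), ← contractFst_tmul_mul, ← D.isLeftIntegral.one_tmul_mul_comul,
    contractFst_tmul_mul, LinearMap.mulLeft_one, LinearMap.comp_id, D.contractFst_comul, mul_one]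

lemma contractFst_mulRight_comul (D : IsIntegralPair l L γ α) (x : H) :
    contractFst (l ∘ₗ LinearMap.mulRight k x) (comul L) = antipode k (leftWinding α x) := by
  rw [← mul_one (contractFst _ _), ← contractFst_mul_tmul, D.comul_mul_tmul_one,
    contractFst_mul_tmul, LinearMap.mulRight_one, LinearMap.comp_id, D.contractFst_comul, one_mul]

variable [FiniteDimensional k H]

lemma exists_mulLeft_antipode_eq_mulRight (D : IsIntegralPair l L γ α) (x : H) :
    ∃ y, l ∘ₗ LinearMap.mulLeft k (antipode k x) = l ∘ₗ LinearMap.mulRight k y :=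
  D.isRightIntegralDual.exists_eq_comp_mulRight D.ne_zero _

lemma antipode_surjective (D : IsIntegralPair l L γ α) :
    Function.Surjective (antipode k (A := H)) := fun x => by
  obtain ⟨y, hy⟩ := D.exists_mulLeft_antipode_eq_mulRight x
  exact ⟨leftWinding α y, by
    rw [← D.contractFst_mulRight_comul, ← hy, D.contractFst_mulLeft_antipode_comul]⟩

-- Radford's formula: evaluate `L₁ ⊗ L₂` against the same functional `l(S(x) ·) = l(· y)`, written
-- in both ways, on either tensor factor.
lemma antipode_pow_four (D : IsIntegralPair l L γ α) :
    rightWindingHom α⁻¹ * leftWindingHom α⁻¹ * conjHom γ⁻¹ * antipodeSq k H ^ 2 = 1 := by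
  suffices h : rightWindingHom α⁻¹ * antipodeSq k H * leftWindingHom α⁻¹ * conjHom γ⁻¹ *
      antipodeSq k H = 1 by
    rw [← h, pow_two, ← mul_assoc, mul_assoc (_ * _) (conjHom _),
      (commute_conjHom_antipodeSq γ⁻¹).eq, ← mul_assoc, mul_assoc _ (leftWindingHom _),
      (commute_leftWindingHom_antipodeSq α⁻¹).eq, ← mul_assoc]
  ext w
  obtain ⟨y, hy⟩ := D.exists_mulLeft_antipode_eq_mulRight w
  obtain ⟨z, rfl⟩ := D.antipode_surjective y
  have hfst : antipode k (leftWinding α (antipode k z)) = w := by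
    rw [← D.contractFst_mulRight_comul, ← hy, D.contractFst_mulLeft_antipode_comul]
  have hsnd : antipodeSq k H w * γ = γ * leftWinding α⁻¹ z := by
    rw [antipodeSq_apply, ← D.contractSnd_mulLeft_comul, hy,
      D.contractSnd_mulRight_antipode_comul]
  have hconj : conjHom γ⁻¹ (antipodeSq k H w) = leftWinding α⁻¹ z := by
    rw [conjHom_apply, inv_inv, mul_assoc, hsnd, ← mul_assoc]
    simp
  simp only [Module.End.mul_apply]
  rw [hconj, leftWindingHom_apply, inv_inv, leftWinding_leftWinding_inv, antipodeSq_apply,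
    rightWindingHom_apply, rightWinding_antipode, inv_inv, hfst]
  rfl

lemma antipodeSq_pow_eq_one (D : IsIntegralPair l L γ α) {n : ℕ} (hγ : γ ^ n = 1)
    (hα : α ^ n = 1) : antipodeSq k H ^ (2 * n) = 1 := by
  have hW := commute_rightWindingHom_leftWindingHom α⁻¹ α⁻¹
  have hWγ := (commute_rightWindingHom_conjHom α⁻¹ γ⁻¹).mul_left
    (commute_leftWindingHom_conjHom α⁻¹ γ⁻¹)
  have hS := ((commute_rightWindingHom_antipodeSq α⁻¹).mul_left
    (commute_leftWindingHom_antipodeSq α⁻¹)).mul_left (commute_conjHom_antipodeSq γ⁻¹)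
  have hpow : (rightWindingHom α⁻¹ * leftWindingHom α⁻¹ * conjHom γ⁻¹) ^ n = 1 := by
    rw [hWγ.mul_pow, hW.mul_pow, ← map_pow, ← map_pow, ← map_pow, inv_pow, inv_pow, hγ, hα]
    simp
  calc antipodeSq k H ^ (2 * n)
      = (rightWindingHom α⁻¹ * leftWindingHom α⁻¹ * conjHom γ⁻¹) ^ n *
          (antipodeSq k H ^ 2) ^ n := by
        rw [hpow, one_mul, pow_mul]
    _ = 1 := by rw [← (hS.pow_right 2).mul_pow, D.antipode_pow_four, one_pow]

end IsIntegralPair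

end Radford

section Maschke

open Coalgebra HopfAlgebra

variable {k H A : Type*} [Field k] [Ring H] [HopfAlgebra k H] [Ring A] [Algebra k A]

/-- The map `x ⊗ y ↦ ρ(x) P ρ(S y)`; its value at the coproduct of an integral averages an operator
`P` on a representation `ρ`, as in Maschke's theorem. -/
noncomputable def average (ρ : H →ₐ[k] A) (P : A) : H ⊗[k] H →ₗ[k] A :=
  LinearMap.mul' k A ∘ₗ TensorProduct.map ρ.toLinearMap
    (LinearMap.mulLeft k P ∘ₗ ρ.toLinearMap ∘ₗ antipode k)

@[simp] lemma average_tmul (ρ : H →ₐ[k] A) (P : A) (x y : H) :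
    average ρ P (x ⊗ₜ y) = ρ x * (P * ρ (antipode k y)) := rfl

lemma average_tmul_one_mul (ρ : H →ₐ[k] A) (P : A) (a : H) (t : H ⊗[k] H) :
    average ρ P ((a ⊗ₜ 1) * t) = ρ a * average ρ P t := by
  induction t with
  | zero => simp
  | tmul x y => simp [mul_assoc]
  | add x y hx hy => simp [mul_add, hx, hy]

lemma average_one_tmul_mul (ρ : H →ₐ[k] A) (P : A) (a : H) (t : H ⊗[k] H) :
    average ρ P ((1 ⊗ₜ a) * t) = average ρ P t * ρ (antipode k a) := by
  induction t with
  | zero => simp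
  | tmul x y => simp [antipode_mul_antidistrib, mul_assoc]
  | add x y hx hy => simp [mul_add, add_mul, hx, hy]

lemma average_comul (ρ : H →ₐ[k] A) (P : A) {ι : Type*} {x : H} (r : Repr k x ι) :
    average ρ P (comul x) = ∑ i ∈ r.index, ρ (r.left i) * (P * ρ (antipode k (r.right i))) := by
  simp [← r.eq]

namespace IsLeftIntegral

variable {L : H}

lemma commute_average_comul (hL : IsLeftIntegral k L)
    (hS : Function.Surjective (antipode k (A := H))) (ρ : H →ₐ[k] A) (P : A) (a : H) :
    Commute (average ρ P (comul L)) (ρ a) := by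
  obtain ⟨a, rfl⟩ := hS a
  exact (average_one_tmul_mul ρ P a _).symm.trans
    ((congrArg _ (hL.one_tmul_mul_comul a)).trans (average_tmul_one_mul ρ P _ _))

theorem isSemisimpleRing (hL : IsLeftIntegral k L)
    (hS : Function.Surjective (antipode k (A := H))) (hL0 : counit (R := k) L ≠ 0) :
    IsSemisimpleRing H := by
  refine (isSemisimpleModule_iff H H).mpr ⟨fun I => ?_⟩
  obtain ⟨π, hπ⟩ := (I.restrictScalars k).subtype.exists_leftInverse_of_injective
    (LinearMap.ker_eq_bot.mpr Subtype.val_injective)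
  let P : Module.End k H := (I.restrictScalars k).subtype ∘ₗ π
  let M : Module.End k H := average (Algebra.lmul k H) P (comul L)
  have hM (x : H) :
      M x = ∑ i ∈ (ℛ k L).index, (ℛ k L).left i * P (antipode k ((ℛ k L).right i) * x) := by
    simp [M, average_comul _ _ (ℛ k L), LinearMap.sum_apply]
  have hmem (x : H) : M x ∈ I := by
    rw [hM]
    exact sum_mem fun i _ => I.smul_mem _ (π _).2
  have hfix (x : H) (hx : x ∈ I) : M x = counit (R := k) L • x := by
    have hP (y : H) (hy : y ∈ I) : P y = y :=
      congrArg Subtype.val (LinearMap.congr_fun hπ ⟨y, hy⟩)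
    rw [hM, ← smul_one_mul, ← sum_mul_antipode_eq_smul (ℛ k L), Finset.sum_mul]
    exact Finset.sum_congr rfl fun i _ =>
      (congrArg _ (hP _ (I.smul_mem _ hx))).trans (mul_assoc _ _ _).symm
  let E : H →ₗ[H] H :=
    { toFun x := (counit (R := k) L)⁻¹ • M x
      map_add' x y := by rw [map_add, smul_add]
      map_smul' a x := by
        have h := LinearMap.congr_fun (hL.commute_average_comul hS (Algebra.lmul k H) P a) x
        rw [RingHom.id_apply, smul_comm]
        exact congrArg _ h }
  have hE : LinearMap.IsProj I E :=
    ⟨fun x => I.smul_of_tower_mem _ (hmem x), fun x hx => by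
      simp [E, hfix x hx, smul_smul, inv_mul_cancel₀ hL0]⟩
  exact ⟨_, hE.isCompl⟩

lemma apply_eq_zero (hL : IsLeftIntegral k L) (hL0 : counit (R := k) L = 0)
    (β : CharacterGroup k H) : β L = 0 := by
  have h := congrArg β (hL L)
  rw [hL0, zero_smul, map_mul, map_zero] at h
  exact mul_self_eq_zero.mp h

end IsLeftIntegral

end Maschke

section Trace

open Coalgebra HopfAlgebra

variable {k H : Type*} [Field k] [Ring H] [HopfAlgebra k H] [FiniteDimensional k H]
  {l : Module.Dual k H} {L : H} {γ : GroupLike k H} {α : CharacterGroup k H}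

namespace IsIntegralPair

lemma counit_eq_zero (D : IsIntegralPair l L γ α) (hss : ¬ IsSemisimpleRing H) :
    counit (R := k) L = 0 := by
  by_contra h
  exact hss (D.isLeftIntegral.isSemisimpleRing D.antipode_surjective h)

lemma trace_comp_antipode (D : IsIntegralPair l L γ α) (φ : Module.End k H) {ι : Type*}
    (r : Repr k L ι) : LinearMap.trace k H (φ ∘ₗ antipode k) =
      ∑ i ∈ r.index, l (φ (r.left i * γ⁻¹.val) * r.right i) := by
  have h : φ ∘ₗ antipode k = ∑ i ∈ r.index, LinearMap.smulRight
      (l ∘ₗ LinearMap.mulRight k (r.right i)) (φ (r.left i * γ⁻¹.val)) := by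
    ext x
    have hx : antipode k x = (antipode k x * γ) * γ⁻¹.val := by
      rw [mul_assoc, ← GroupLike.val_mul, mul_inv_cancel, GroupLike.val_one, mul_one]
    rw [LinearMap.comp_apply, hx, ← D.contractSnd_mulLeft_comul, _root_.contractSnd_comul _ r,
      Finset.sum_mul]
    simp [LinearMap.sum_apply]
  rw [h, map_sum]
  simp [LinearMap.trace_smulRight]

lemma trace_antipodeSq_mul_mulLeft_mul_rightWindingHom (D : IsIntegralPair l L γ α)
    (hL : counit (R := k) L = 0) (c : H) (β : CharacterGroup k H) :
    LinearMap.trace k H (antipodeSq k H * (LinearMap.mulLeft k c * rightWindingHom β)) = 0 := by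
  let r := ℛ k L
  let φ : Module.End k H :=
    antipode k ∘ₗ LinearMap.mulRight k (antipode k c) ∘ₗ (leftWinding β⁻¹).toLinearMap
  have hφ : antipodeSq k H * (LinearMap.mulLeft k c * rightWindingHom β) = φ ∘ₗ antipode k := by
    ext x
    simp [φ, antipodeSq_apply, antipode_mul_antidistrib, leftWinding_antipode]
  have hφl (x : H) : φ (x * γ⁻¹.val) =
      φ γ⁻¹.val * antipode k (leftWinding β⁻¹ x) := by
    simp [φ, antipode_mul_antidistrib, mul_assoc]
  calc LinearMap.trace k H (antipodeSq k H * (LinearMap.mulLeft k c * rightWindingHom β))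
      = ∑ i ∈ r.index, l (φ (r.left i * γ⁻¹.val) * r.right i) := by
        rw [hφ, D.trace_comp_antipode φ r]
    _ = l (φ γ⁻¹.val *
          ∑ i ∈ r.index, antipode k (leftWinding β⁻¹ (r.left i)) * r.right i) := by
        rw [Finset.mul_sum, map_sum]
        simp only [hφl, mul_assoc]
    _ = 0 := by
        rw [sum_antipode_leftWinding_mul β⁻¹ r, D.isLeftIntegral.apply_eq_zero hL, zero_smul,
          mul_zero, map_zero]

lemma trace_antipodeSq_mul_mulLeftHom (D : IsIntegralPair l L γ α)
    (hL : counit (R := k) L = 0) (c : GroupLike k H) :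
    LinearMap.trace k H (antipodeSq k H * mulLeftHom c) = 0 := by
  have h := D.trace_antipodeSq_mul_mulLeft_mul_rightWindingHom hL c 1
  rwa [map_one, mul_one] at h

lemma trace_antipodeSq_mul_rightWindingHom (D : IsIntegralPair l L γ α)
    (hL : counit (R := k) L = 0) (β : CharacterGroup k H) :
    LinearMap.trace k H (antipodeSq k H * rightWindingHom β) = 0 := by
  have h := D.trace_antipodeSq_mul_mulLeft_mul_rightWindingHom hL 1 β
  rwa [LinearMap.mulLeft_one, ← Module.End.one_eq_id, one_mul] at h

lemma trace_antipodeSq (D : IsIntegralPair l L γ α) (hL : counit (R := k) L = 0) :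
    LinearMap.trace k H (antipodeSq k H) = 0 := by
  have h := D.trace_antipodeSq_mul_rightWindingHom hL 1
  rwa [map_one, mul_one] at h

end IsIntegralPair

end Trace

section GaloisMap

open Coalgebra HopfAlgebra

variable {k H : Type*} [Field k] [Ring H] [HopfAlgebra k H]

variable (k H) in
/-- The Galois map `x ⊗ y ↦ Δ(x) (1 ⊗ y)` of `H`. -/
noncomputable def galoisMap : H ⊗[k] H →ₗ[k] H ⊗[k] H :=
  LinearMap.mul' k (H ⊗[k] H) ∘ₗ TensorProduct.map comul
    (Algebra.TensorProduct.includeRight (R := k) (A := H) (B := H)).toLinearMap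

@[simp] lemma galoisMap_tmul (x y : H) :
    galoisMap k H (x ⊗ₜ y) = comul x * ((1 : H) ⊗ₜ[k] y) := by
  simp [galoisMap]

lemma galoisMap_surjective : Function.Surjective (galoisMap k H) := by
  rw [← LinearMap.range_eq_top, eq_top_iff, ← TensorProduct.span_tmul_eq_top, Submodule.span_le]
  rintro _ ⟨a, b, rfl⟩
  let r := ℛ k a
  refine ⟨∑ i ∈ r.index, r.left i ⊗ₜ (antipode k (r.right i) * b), ?_⟩
  have h := congrArg (· * ((1 : H) ⊗ₜ[k] b)) (sum_comul_mul_one_tmul_antipode r)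
  simpa [Finset.sum_mul, mul_assoc] using h

variable [FiniteDimensional k H]

lemma trace_eq_of_galoisMap_comp_eq {X Y : Module.End k (H ⊗[k] H)}
    (h : galoisMap k H ∘ₗ X = Y ∘ₗ galoisMap k H) :
    LinearMap.trace k _ X = LinearMap.trace k _ Y := by
  let e : (H ⊗[k] H) ≃ₗ[k] H ⊗[k] H := LinearEquiv.ofBijective (galoisMap k H)
    ⟨LinearMap.injective_iff_surjective.mpr galoisMap_surjective, galoisMap_surjective⟩
  have he : e.conj X = Y := LinearMap.ext fun t => by
    obtain ⟨s, rfl⟩ := e.surjective t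
    rw [LinearEquiv.conj_apply_apply, e.symm_apply_apply]
    exact LinearMap.congr_fun h s
  rw [← he, LinearMap.trace_conj']

lemma trace_mulLeftHom_mul_self (c : GroupLike k H) :
    LinearMap.trace k H (mulLeftHom c) * LinearMap.trace k H (mulLeftHom c) =
      LinearMap.trace k H (mulLeftHom c) * Module.finrank k H := by
  have hmul (t : H ⊗[k] H) : TensorProduct.map (mulLeftHom c) (mulLeftHom c) t =
      (c.val ⊗ₜ c.val) * t := by
    induction t with
    | zero => simp
    | tmul x y => simp
    | add x y hx hy => simp [mul_add, hx, hy]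
  have h : galoisMap k H ∘ₗ TensorProduct.map (mulLeftHom c) LinearMap.id =
      TensorProduct.map (mulLeftHom c) (mulLeftHom c) ∘ₗ galoisMap k H := by
    ext x y
    simp [hmul, c.isGroupLikeElem_val.comul_eq_tmul_self, mul_assoc]
  have htr := trace_eq_of_galoisMap_comp_eq h
  rw [LinearMap.trace_tensorProduct', LinearMap.trace_tensorProduct', LinearMap.trace_id] at htr
  exact htr.symm

lemma trace_rightWindingHom_mul_self (β : CharacterGroup k H) :
    LinearMap.trace k H (rightWindingHom β) * LinearMap.trace k H (rightWindingHom β) =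
      LinearMap.trace k H (rightWindingHom β) * Module.finrank k H := by
  let F := Algebra.TensorProduct.map (AlgHom.id k H) (rightWinding β)
  have h : galoisMap k H ∘ₗ TensorProduct.map (rightWindingHom β) (rightWindingHom β) =
      F.toLinearMap ∘ₗ galoisMap k H := TensorProduct.ext' fun x y => by
    change galoisMap k H (rightWinding β x ⊗ₜ rightWinding β y) = F (galoisMap k H (x ⊗ₜ y))
    rw [galoisMap_tmul, galoisMap_tmul, comul_rightWinding, map_mul, Algebra.TensorProduct.map_tmul,
      map_one]
  have htr := trace_eq_of_galoisMap_comp_eq h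
  have hF : F.toLinearMap = TensorProduct.map LinearMap.id (rightWindingHom β) := rfl
  rw [hF, LinearMap.trace_tensorProduct', LinearMap.trace_tensorProduct', LinearMap.trace_id] at htr
  rw [htr, mul_comm]

instance : Finite (GroupLike k H) :=
  (linearIndep_groupLikeVal (R := k) (A := H)).finite

variable [CharZero k]

lemma trace_mulLeftHom_eq_zero {c : GroupLike k H} (hc : c ≠ 1) :
    LinearMap.trace k H (mulLeftHom c) = 0 := by
  refine trace_eq_zero_of_trace_mul_self_eq (orderOf_pos c).ne'
    (by rw [← map_pow, pow_orderOf_eq_one, map_one]) (fun h => hc ?_) (trace_mulLeftHom_mul_self c)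
  exact GroupLike.val_injective (by simpa using LinearMap.congr_fun h 1)

lemma trace_rightWindingHom_eq_zero {β : CharacterGroup k H} (hβ : β ≠ 1) :
    LinearMap.trace k H (rightWindingHom β) = 0 := by
  refine trace_eq_zero_of_trace_mul_self_eq (orderOf_pos β).ne'
    (by rw [← map_pow, pow_orderOf_eq_one, map_one]) (fun h => hβ ?_)
    (trace_rightWindingHom_mul_self β)
  refine WithConv.ofConv_injective (AlgHom.ext fun x => ?_)
  change β x = counit x
  rw [← counit_rightWinding, ← rightWindingHom_apply, h]
  rfl

end GaloisMap

section Orders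

open HopfAlgebra Module

variable {k H : Type*} [Field k] [Ring H] [HopfAlgebra k H]

lemma apply_eq_one_of_coprime_orderOf {c : GroupLike k H} {β : CharacterGroup k H}
    (h : (orderOf c).Coprime (orderOf β)) : β c = 1 := by
  let evalChar : GroupLike k H →* k := (β.ofConv : H →* k).comp (GroupLike.valMonoidHom k H)
  let evalGroupLike : CharacterGroup k H →* k :=
    { toFun β := β c
      map_one' := c.isGroupLikeElem_val.counit_eq_one
      map_mul' β β' := by
        rw [AlgHom.convMul_apply, c.isGroupLikeElem_val.comul_eq_tmul_self,
          Algebra.TensorProduct.lift_tmul] }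
  rw [← orderOf_eq_one_iff]
  exact Nat.eq_one_of_dvd_coprimes h (orderOf_map_dvd evalChar c) (orderOf_map_dvd evalGroupLike β)

variable [FiniteDimensional k H]

lemma finrank_span_powers_groupLike (c : GroupLike k H) :
    finrank k (Submodule.span k (Set.range fun y : Submonoid.powers c => (y : GroupLike k H).val)) =
      orderOf c := by
  have := Fintype.ofFinite (Submonoid.powers c)
  have hli := (linearIndep_groupLikeVal (R := k) (A := H)).comp
    (Subtype.val : Submonoid.powers c → GroupLike k H) Subtype.val_injective
  rw [← Nat.card_submonoidPowers, Nat.card_eq_fintype_card]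
  exact finrank_span_eq_card hli

variable [CharZero k]

lemma orderOf_groupLike_dvd_finrank (c : GroupLike k H) : orderOf c ∣ finrank k H :=
  Dvd.intro_left _ <| finrank_eigenspace_map_mul_orderOf (isOfFinOrder_of_finite c)
    fun _ => trace_mulLeftHom_eq_zero

lemma orderOf_character_dvd_finrank (β : CharacterGroup k H) : orderOf β ∣ finrank k H :=
  Dvd.intro_left _ <| finrank_eigenspace_map_mul_orderOf (isOfFinOrder_of_finite β)
    fun _ => trace_rightWindingHom_eq_zero

namespace IsIntegralPair

variable {l : Module.Dual k H} {L : H} {γ : GroupLike k H} {α : CharacterGroup k H}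

-- The powers of `c` span a subspace of the space of vectors fixed by `β`; both operators being
-- compatible with `S²`, equality would make `S²` the identity there, against its zero trace.
lemma orderOf_mul_orderOf_lt_finrank (D : IsIntegralPair l L γ α)
    (hL : Coalgebra.counit (R := k) L = 0) {c : GroupLike k H} {β : CharacterGroup k H}
    (h : (orderOf c).Coprime (orderOf β)) : orderOf c * orderOf β < finrank k H := by
  have hβ := isOfFinOrder_of_finite β
  let W := End.eigenspace (rightWindingHom β : Module.End k H) 1
  have hT : ∀ v ∈ W, antipodeSq k H v ∈ W := fun _ hv =>
    End.mapsTo_genEigenspace_of_comm (commute_rightWindingHom_antipodeSq β) 1 1 hv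
  have htr := trace_restrict_eigenspace_map_eq_zero hβ hT
    (D.trace_antipodeSq_mul_rightWindingHom hL)
  rw [← finrank_eigenspace_map_mul_orderOf hβ fun _ => trace_rightWindingHom_eq_zero (H := H),
    ← finrank_span_powers_groupLike c]
  refine Nat.mul_lt_mul_of_pos_right (finrank_lt_of_trace_restrict_eq_zero hT htr ?_ ?_ ?_)
    hβ.orderOf_pos
  · rw [Submodule.span_le]
    rintro _ ⟨⟨_, n, rfl⟩, rfl⟩
    simp [rightWinding_groupLike, apply_eq_one_of_coprime_orderOf h]
  · refine fun hbot => (orderOf_pos c).ne' ?_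
    rw [← finrank_span_powers_groupLike c, hbot, finrank_bot]
  · refine fun u hu => Submodule.span_induction ?_ (map_zero _) (fun x y _ _ hx hy => ?_)
      (fun a x _ hx => ?_) hu
    · rintro _ ⟨y, rfl⟩
      exact antipodeSq_groupLike _
    · rw [map_add, hx, hy]
    · rw [map_smul, hx]

lemma mul_orderOf_groupLike_le_finrank (D : IsIntegralPair l L γ α)
    (hL : Coalgebra.counit (R := k) L = 0) (hH : Odd (finrank k H)) {q : ℕ} (hq : q.Prime)
    (hodd : Odd q) (hS : antipodeSq k H ^ (2 * q) = 1) (c : GroupLike k H) :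
    q * orderOf c ≤ finrank k H :=
  mul_orderOf_le_finrank hq hodd hH (isOfFinOrder_of_finite c) (fun _ => trace_mulLeftHom_eq_zero)
    (commute_mulLeftHom_antipodeSq c) hS (D.trace_antipodeSq_mul_mulLeftHom hL)

lemma mul_orderOf_character_le_finrank (D : IsIntegralPair l L γ α)
    (hL : Coalgebra.counit (R := k) L = 0) (hH : Odd (finrank k H)) {q : ℕ} (hq : q.Prime)
    (hodd : Odd q) (hS : antipodeSq k H ^ (2 * q) = 1) (β : CharacterGroup k H) :
    q * orderOf β ≤ finrank k H :=
  mul_orderOf_le_finrank hq hodd hH (isOfFinOrder_of_finite β)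
    (fun _ => trace_rightWindingHom_eq_zero) (commute_rightWindingHom_antipodeSq β) hS
    (D.trace_antipodeSq_mul_rightWindingHom hL)

lemma le_of_antipodeSq_pow_eq_one (D : IsIntegralPair l L γ α)
    (hL : Coalgebra.counit (R := k) L = 0) (hH : Odd (finrank k H)) {p m : ℕ} (hp : p.Prime)
    (hSp : antipodeSq k H ^ (2 * p) = 1) (hm : 0 < m) (hSm : antipodeSq k H ^ (2 * m) = 1) :
    p ≤ m := by
  by_contra! hlt
  rw [pow_mul] at hSp hSm
  have hS : antipodeSq k H ^ 2 = 1 := orderOf_eq_one_iff.mp <|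
    Nat.eq_one_of_dvd_coprimes (Nat.coprime_of_lt_prime hm.ne' hlt hp)
      (orderOf_dvd_of_pow_eq_one hSp) (orderOf_dvd_of_pow_eq_one hSm)
  exact Nat.not_even_iff_odd.mpr hH (even_finrank_of_pow_two_eq_one hS (D.trace_antipodeSq hL))

end IsIntegralPair

end Orders

section PrimeProduct

lemma dvd_left_or_eq_right_of_dvd_prime_mul_prime {p q d : ℕ} (hp : p.Prime) (hq : q.Prime)
    (hd : d ∣ p * q) (hlt : d < p * q) : d ∣ p ∨ d = q := by
  obtain ⟨a, b, ha, hb, rfl⟩ := Nat.dvd_mul.mp hd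
  rcases (Nat.dvd_prime hq).mp hb with rfl | rfl
  · exact .inl (by rwa [mul_one])
  · rcases (Nat.dvd_prime hp).mp ha with rfl | rfl
    · exact .inr (one_mul _)
    · exact absurd hlt (lt_irrefl _)

lemma dvd_left_of_dvd_prime_mul_prime {p q d e : ℕ} (hp : p.Prime) (hq : q.Prime) (hpq : p ≤ q)
    (hd : d ∣ p * q) (he : e ∣ p * q) (hlt : d.Coprime e → d * e < p * q) (hd' : d < p * q)
    (he' : e < p * q) (hle : d ∣ q → e ∣ q → d ≤ p) : d ∣ p := by
  rcases dvd_left_or_eq_right_of_dvd_prime_mul_prime hp hq hd hd' with h | rfl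
  · exact h
  rcases hpq.eq_or_lt with rfl | hpq
  · exact dvd_rfl
  suffices he : e ∣ d from absurd (hle dvd_rfl he) hpq.not_ge
  rcases dvd_left_or_eq_right_of_dvd_prime_mul_prime hp hq he he' with h | rfl
  · rcases (Nat.dvd_prime hp).mp h with rfl | rfl
    · exact one_dvd _
    · have := hlt ((Nat.coprime_primes hq hp).mpr hpq.ne')
      exact absurd this (by rw [mul_comm]; exact lt_irrefl _)
  · exact dvd_rfl

end PrimeProduct

section Index

open HopfAlgebra Module

variable {k H : Type*} [Field k] [CharZero k] [Ring H] [HopfAlgebra k H] [FiniteDimensional k H]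
  {l : Module.Dual k H} {L : H} {γ : GroupLike k H} {α : CharacterGroup k H}

theorem IsIntegralPair.orderOf_dvd (D : IsIntegralPair l L γ α)
    (hL : Coalgebra.counit (R := k) L = 0) {p q : ℕ} (hp : p.Prime) (hq : q.Prime) (hpodd : Odd p)
    (hqodd : Odd q) (hpq : p ≤ q) (hdim : finrank k H = p * q) :
    orderOf γ ∣ p ∧ orderOf α ∣ p := by
  have hH : Odd (finrank k H) := hdim ▸ hpodd.mul hqodd
  have hγlt := D.orderOf_mul_orderOf_lt_finrank hL (c := γ) (β := 1) (by simp)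
  have hαlt := D.orderOf_mul_orderOf_lt_finrank hL (c := 1) (β := α) (by simp)
  have hlt := D.orderOf_mul_orderOf_lt_finrank hL (c := γ) (β := α)
  have hS (hγ : orderOf γ ∣ q) (hα : orderOf α ∣ q) : antipodeSq k H ^ (2 * q) = 1 :=
    D.antipodeSq_pow_eq_one (orderOf_dvd_iff_pow_eq_one.mp hγ) (orderOf_dvd_iff_pow_eq_one.mp hα)
  have hγdvd := orderOf_groupLike_dvd_finrank γ
  have hαdvd := orderOf_character_dvd_finrank α
  have hγle (h : antipodeSq k H ^ (2 * q) = 1) :=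
    D.mul_orderOf_groupLike_le_finrank hL hH hq hqodd h γ
  have hαle (h : antipodeSq k H ^ (2 * q) = 1) :=
    D.mul_orderOf_character_le_finrank hL hH hq hqodd h α
  simp only [hdim, orderOf_one, mul_one, one_mul] at hγlt hαlt hlt hγdvd hαdvd hγle hαle
  rw [mul_comm p q] at hγle hαle
  exact ⟨dvd_left_of_dvd_prime_mul_prime hp hq hpq hγdvd hαdvd hlt hγlt hαlt
      fun hγ hα => Nat.le_of_mul_le_mul_left (hγle (hS hγ hα)) hq.pos,
    dvd_left_of_dvd_prime_mul_prime hp hq hpq hαdvd hγdvd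
      (fun h => (mul_comm _ _).trans_lt (hlt h.symm)) hαlt hγlt
      fun hα hγ => Nat.le_of_mul_le_mul_left (hαle (hS hγ hα)) hq.pos⟩

end Index

theorem stmt2_general (k : Type*) [Field k] [CharZero k]
    (p q : ℕ) (hp : p.Prime) (hq : q.Prime) (hpodd : Odd p) (hqodd : Odd q) (hpq : p ≤ q)
    (H : Type*) [Ring H] [HopfAlgebra k H] [FiniteDimensional k H]
    (hdim : Module.finrank k H = p * q) (hss : ¬ IsSemisimpleRing H)
    (g : H) (hg : IsDistinguishedGroupLike k g) :
    IsHopfIndex k g p := by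
  obtain ⟨l, L, γ, α, rfl, D⟩ := hg.exists_isIntegralPair
  have hL := D.counit_eq_zero hss
  obtain ⟨hγ, hα⟩ := D.orderOf_dvd hL hp hq hpodd hqodd hpq hdim
  rw [orderOf_dvd_iff_pow_eq_one] at hγ hα
  have hpow (n : ℕ) : HopfAlgebra.antipode k (A := H) ^ (4 * n) = antipodeSq k H ^ (2 * n) := by
    rw [← pow_mul, ← mul_assoc]; rfl
  have hS := D.antipodeSq_pow_eq_one hγ hα
  refine ⟨hp.pos, (hpow p).trans hS, by rw [← GroupLike.val_pow, hγ, GroupLike.val_one],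
    fun m hm hSm _ => ?_⟩
  exact D.le_of_antipodeSq_pow_eq_one hL (hdim ▸ hpodd.mul hqodd) hp hS hm ((hpow m).symm.trans hSm)

/-- Proposition 5.2(ii). If `H` is a non-semisimple Hopf algebra of dimension
`p q`, where `p ≤ q` are odd primes, over an algebraically closed field of characteristic `0`,
then the index of `H` is `p`. -/
theorem stmt2 (k : Type*) [Field k] [IsAlgClosed k] [CharZero k]
    (p q : ℕ) (hp : p.Prime) (hq : q.Prime) (hpodd : Odd p) (hqodd : Odd q) (hpq : p ≤ q)
    (H : Type*) [Ring H] [HopfAlgebra k H] [FiniteDimensional k H]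
    (hdim : Module.finrank k H = p * q) (hss : ¬ IsSemisimpleRing H)
    (g : H) (hg : IsDistinguishedGroupLike k g) :
    IsHopfIndex k g p :=
  stmt2_general k p q hp hq hpodd hqodd hpq H hdim hss g hg
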